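/- (Keller–Osserman type bound.) Let n ≥ 2, μ < 1/4, p > 1 and R > 0. Then there exists a constant C > 0, depending only on n, μ, p and R (in particular independent of the solution), such that every positive u ∈ C²(ℝⁿ₊ ∩ B_R(0)) satisfying Δu + (μ/x₁²)u = u^p on ℝⁿ₊ ∩ B_R(0) obeys u(x) ≤ C x₁^{−2/(p−1)} for all x ∈ ℝⁿ₊ ∩ B_{R/2}(0). -/

import Mathlib

open Real Set

noncomputable def lap {n : ℕ} (u : EuclideanSpace ℝ (Fin n) → ℝ)
    (x : EuclideanSpace ℝ (Fin n)) : ℝ :=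
  ∑ i : Fin n, iteratedFDeriv ℝ 2 u x ![EuclideanSpace.single i 1, EuclideanSpace.single i 1]

noncomputable def x1 {n : ℕ} (x : EuclideanSpace ℝ (Fin n)) : ℝ :=
  if h : 0 < n then x ⟨0, h⟩ else 0

def halfSpace (n : ℕ) : Set (EuclideanSpace ℝ (Fin n)) := {x | 0 < x1 x}

noncomputable def aPlus (μ : ℝ) : ℝ := 1 / 2 + Real.sqrt (1 / 4 - μ)

noncomputable def aMinus (μ : ℝ) : ℝ := 1 / 2 - Real.sqrt (1 / 4 - μ)

noncomputable def Lam (n : ℕ) (s : ℝ) : ℝ := s * (s + n - 2)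

/-!
A solution at `x` is compared, on the ball of radius `r = x₁ / 2` about `x`, with the multiple
`w = A * (r² - |z - x|²) ^ (-2 / (p - 1))` of a radial barrier that blows up on the sphere. On this
ball the potential is at most `|μ| / r²`, so `w` is a supersolution as soon as `A ^ (p - 1)` is a
suitable multiple of `r²`. The quotient `u / w` vanishes at the sphere, hence has an interior
maximum `m`; there `Δ u ≤ m * Δ w`, so `m ^ p ≤ m` and `m ≤ 1`. At the centre, `u ≤ w` is the bound.
-/

section KellerOsserman

open Filter Topology Metric Laplacian InnerProductSpace Module

section SecondDerivatives

theorem iteratedDeriv_two_eq_deriv_deriv (f : ℝ → ℝ) : iteratedDeriv 2 f = deriv (deriv f) := by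
  rw [iteratedDeriv_succ, iteratedDeriv_one]

theorem iteratedDeriv_two_nonpos_of_isLocalMax {f : ℝ → ℝ} {a : ℝ} (hmax : IsLocalMax f a)
    (hf : ContinuousAt f a) : iteratedDeriv 2 f a ≤ 0 := by
  rw [iteratedDeriv_two_eq_deriv_deriv]
  by_contra! hpos
  have hmin : IsLocalMin f a := isLocalMin_of_deriv_deriv_pos hpos hmax.deriv_eq_zero hf
  have hconst : f =ᶠ[𝓝 a] fun _ => f a := by
    filter_upwards [hmin, hmax] with t hge hle using le_antisymm hle hge
  rw [hconst.deriv.deriv_eq] at hpos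
  simp at hpos

theorem deriv_quadratic (a b c : ℝ) :
    deriv (fun t : ℝ => a + b * t + c * t ^ 2) = fun t => b + 2 * c * t := by
  ext t
  have ht : HasDerivAt (fun t : ℝ => a + b * t + c * t ^ 2) (b * 1 + c * (2 * t)) t := by
    simpa using (((hasDerivAt_id' t).const_mul b).const_add a).fun_add
      ((hasDerivAt_pow 2 t).const_mul c)
  rw [ht.deriv]
  ring

theorem iteratedDeriv_two_comp_quadratic_zero {g : ℝ → ℝ} {a : ℝ} (hg : ContDiffAt ℝ 2 g a)
    (b c : ℝ) :
    iteratedDeriv 2 (fun t : ℝ => g (a + b * t + c * t ^ 2)) 0 =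
      b ^ 2 * iteratedDeriv 2 g a + 2 * c * deriv g a := by
  have h0 : a + b * 0 + c * 0 ^ 2 = a := by ring
  have hcomp := iteratedDeriv_comp_two (g := g) (f := fun t : ℝ => a + b * t + c * t ^ 2) (x := 0)
    (by rwa [h0]) (by fun_prop)
  have hderiv2 : iteratedDeriv 2 (fun t : ℝ => a + b * t + c * t ^ 2) 0 = 2 * c := by
    rw [iteratedDeriv_two_eq_deriv_deriv, deriv_quadratic]
    simp
  rw [hderiv2, deriv_quadratic, h0] at hcomp
  refine hcomp.trans ?_
  ring

theorem deriv_const_sub_rpow (c β : ℝ) :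
    deriv (fun s : ℝ => (c - s) ^ β) = fun s => -β * (c - s) ^ (β - 1) := by
  ext s
  rw [deriv_comp_const_sub (f := (· ^ β)), Real.deriv_rpow_const, neg_mul]

theorem iteratedDeriv_two_const_sub_rpow (c β : ℝ) :
    iteratedDeriv 2 (fun s : ℝ => (c - s) ^ β) = fun s => β * (β - 1) * (c - s) ^ (β - 2) := by
  ext s
  rw [iteratedDeriv_two_eq_deriv_deriv, deriv_const_sub_rpow, deriv_const_mul_field,
    deriv_const_sub_rpow, sub_sub, one_add_one_eq_two]
  ring

variable {E F : Type*} [NormedAddCommGroup E] [NormedSpace ℝ E]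
  [NormedAddCommGroup F] [NormedSpace ℝ F]

theorem iteratedDeriv_two_comp_add_smul_zero {f : E → F} {x : E} (hf : ContDiffAt ℝ 2 f x)
    (e : E) :
    iteratedDeriv 2 (fun t : ℝ => f (x + t • e)) 0 = iteratedFDeriv ℝ 2 f x ![e, e] := by
  have hx : x + (0 : ℝ) • e = x := by simp
  have hderiv : deriv (fun t : ℝ => x + t • e) = fun _ => e := by
    ext t
    simpa using (((hasDerivAt_id t).smul_const e).const_add x).deriv
  have hderiv2 : iteratedDeriv 2 (fun t : ℝ => x + t • e) 0 = 0 := by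
    rw [iteratedDeriv_succ', hderiv, iteratedDeriv_one, deriv_const]
  have hcomp := iteratedDeriv_vcomp_two (f := fun t : ℝ => x + t • e) (x := 0) (g := f)
    (by rwa [hx]) (by fun_prop)
  rw [hderiv2, hderiv, hx, map_zero, add_zero] at hcomp
  refine hcomp.trans (congrArg _ (funext fun i => ?_))
  fin_cases i <;> rfl

end SecondDerivatives

section Laplacian

variable {E : Type*} [NormedAddCommGroup E] [InnerProductSpace ℝ E] [FiniteDimensional ℝ E]

theorem laplacian_eq_sum_iteratedDeriv {ι : Type*} [Fintype ι] (b : OrthonormalBasis ι ℝ E)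
    {f : E → ℝ} {x : E} (hf : ContDiffAt ℝ 2 f x) :
    Δ f x = ∑ i, iteratedDeriv 2 (fun t : ℝ => f (x + t • b i)) 0 := by
  simp only [laplacian_eq_iteratedFDeriv_orthonormalBasis f b,
    iteratedDeriv_two_comp_add_smul_zero hf]

theorem laplacian_nonpos_of_isLocalMax {f : E → ℝ} {x : E} (hmax : IsLocalMax f x)
    (hf : ContDiffAt ℝ 2 f x) : Δ f x ≤ 0 := by
  set b := stdOrthonormalBasis ℝ E
  rw [laplacian_eq_sum_iteratedDeriv b hf]
  refine Finset.sum_nonpos fun i _ => ?_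
  have hline : Tendsto (fun t : ℝ => x + t • b i) (𝓝 0) (𝓝 x) :=
    Continuous.tendsto' (by fun_prop) _ _ (by simp)
  refine iteratedDeriv_two_nonpos_of_isLocalMax ?_ ?_
  · simpa [IsLocalMax, IsMaxFilter] using hline.eventually hmax
  · simpa [ContinuousAt, Function.comp_def] using hf.continuousAt.tendsto.comp hline

theorem laplacian_comp_norm_sub_sq {g : ℝ → ℝ} (x₀ x : E)
    (hg : ContDiffAt ℝ 2 g (‖x - x₀‖ ^ 2)) :
    Δ (fun z => g (‖z - x₀‖ ^ 2)) x =
      4 * ‖x - x₀‖ ^ 2 * iteratedDeriv 2 g (‖x - x₀‖ ^ 2) +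
        2 * finrank ℝ E * deriv g (‖x - x₀‖ ^ 2) := by
  have hf : ContDiffAt ℝ 2 (fun z => g (‖z - x₀‖ ^ 2)) x :=
    hg.comp x ((contDiffAt_id.sub contDiffAt_const).norm_sq ℝ)
  set b := stdOrthonormalBasis ℝ E
  have hline (i) (t : ℝ) :
      ‖x + t • b i - x₀‖ ^ 2 = ‖x - x₀‖ ^ 2 + 2 * inner ℝ (b i) (x - x₀) * t + 1 * t ^ 2 := by
    rw [add_sub_right_comm, norm_add_sq_real, norm_smul, inner_smul_right, b.norm_eq_one,
      real_inner_comm, mul_one, Real.norm_eq_abs, sq_abs]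
    ring
  rw [laplacian_eq_sum_iteratedDeriv b hf]
  simp only [hline, iteratedDeriv_two_comp_quadratic_zero hg, mul_pow]
  rw [Finset.sum_add_distrib, ← Finset.sum_mul, ← Finset.mul_sum, b.sum_sq_inner_right,
    Finset.sum_const, Finset.card_univ, Fintype.card_fin, nsmul_eq_mul]
  ring

end Laplacian

section Comparison

theorem exists_isMaxOn_div_of_tendsto_atTop {X : Type*} [TopologicalSpace X] {Ω : Set X}
    {u w : X → ℝ} (hΩ : IsOpen Ω) (hcpt : IsCompact (closure Ω))
    (hu : ContinuousOn u (closure Ω)) (hw : ContinuousOn w Ω) (hw_pos : ∀ x ∈ Ω, 0 < w x)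
    (hw_top : ∀ z ∈ frontier Ω, Tendsto w (𝓝[Ω] z) atTop) {x : X} (hx : x ∈ Ω) (hux : 0 < u x) :
    ∃ y ∈ Ω, 0 < u y ∧ IsMaxOn (fun z => u z / w z) Ω y := by
  classical
  set q : X → ℝ := fun z => u z / w z
  have hq : ContinuousOn q Ω :=
    (hu.mono subset_closure).div hw fun y hy => (hw_pos y hy).ne'
  have hq_ext : ContinuousOn (Ω.indicator q) (closure Ω) := by
    intro z hz
    by_cases hzΩ : z ∈ Ω
    · have hΩz := hΩ.mem_nhds hzΩ
      exact ((hq.continuousAt hΩz).congr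
        (eqOn_indicator.symm.eventuallyEq_of_mem hΩz)).continuousWithinAt
    · have hzf : z ∈ frontier Ω := ⟨hz, by rwa [hΩ.interior_eq]⟩
      have hlim : Tendsto q (𝓝[Ω] z) (𝓝 0) :=
        ((hu z hz).mono subset_closure).tendsto.div_atTop (hw_top z hzf)
      rw [ContinuousWithinAt, indicator_of_notMem hzΩ, ← piecewise_eq_indicator]
      exact Tendsto.piecewise_nhdsWithin
        (hlim.mono_left (nhdsWithin_mono z inter_subset_right)) tendsto_const_nhds
  obtain ⟨y, -, hmax⟩ := hcpt.exists_isMaxOn ⟨x, subset_closure hx⟩ hq_ext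
  have hqy : 0 < Ω.indicator q y := by
    refine lt_of_lt_of_le ?_ (hmax (subset_closure hx))
    rw [indicator_of_mem hx]
    exact div_pos hux (hw_pos x hx)
  have hy : y ∈ Ω := mem_of_indicator_ne_zero hqy.ne'
  rw [indicator_of_mem hy] at hqy
  refine ⟨y, hy, (div_pos_iff_of_pos_right (hw_pos y hy)).1 hqy, fun z hz => ?_⟩
  simpa only [mem_ofPred_eq, indicator_of_mem hz, indicator_of_mem hy] using
    hmax (subset_closure hz)

variable {E : Type*} [NormedAddCommGroup E] [InnerProductSpace ℝ E] [FiniteDimensional ℝ E]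

theorem le_of_isLocalMax_div {u w : E → ℝ} {V p : ℝ} {y : E} (hp : 1 < p)
    (hu : ContDiffAt ℝ 2 u y) (hw : ContDiffAt ℝ 2 w y) (huy : 0 < u y) (hwy : 0 < w y)
    (hsub : u y ^ p ≤ Δ u y + V * u y) (hsup : Δ w y + V * w y ≤ w y ^ p)
    (hmax : IsLocalMax (fun z => u z / w z) y) : u y ≤ w y := by
  set m := u y / w y
  have hm_pos : 0 < m := div_pos huy hwy
  have huw : u y = m * w y := (div_mul_cancel₀ _ hwy.ne').symm
  have hmw : ContDiffAt ℝ 2 (m • w) y := hw.const_smul m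
  have htouch : IsLocalMax (u - m • w) y := by
    filter_upwards [hmax, hw.continuousAt.eventually (lt_mem_nhds hwy)] with z hz hwz
    have : u z ≤ m * w z := (div_le_iff₀ hwz).1 hz
    simpa [← huw] using this
  have hlap : Δ u y ≤ m * Δ w y := by
    have := laplacian_nonpos_of_isLocalMax htouch (hu.sub hmw)
    rwa [hu.laplacian_sub hmw, laplacian_smul m hw, smul_eq_mul, sub_nonpos] at this
  have hpow : m ^ p * w y ^ p ≤ m * w y ^ p :=
    calc m ^ p * w y ^ p = u y ^ p := by rw [huw, mul_rpow hm_pos.le hwy.le]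
      _ ≤ Δ u y + V * u y := hsub
      _ ≤ m * Δ w y + V * (m * w y) := by rw [← huw]; gcongr
      _ = m * (Δ w y + V * w y) := by ring
      _ ≤ m * w y ^ p := by gcongr
  have hm_le : m ≤ 1 := by
    by_contra! hm
    exact (le_of_mul_le_mul_right hpow (rpow_pos_of_pos hwy p)).not_gt
      (self_lt_rpow_of_one_lt hm hp)
  exact (div_le_one hwy).1 hm_le

theorem le_of_tendsto_atTop_frontier {Ω : Set E} {u w V : E → ℝ} {p : ℝ} (hp : 1 < p)
    (hΩ : IsOpen Ω) (hbdd : Bornology.IsBounded Ω)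
    (huc : ContinuousOn u (closure Ω)) (hu : ContDiffOn ℝ 2 u Ω) (hw : ContDiffOn ℝ 2 w Ω)
    (hw_pos : ∀ x ∈ Ω, 0 < w x) (hw_top : ∀ z ∈ frontier Ω, Tendsto w (𝓝[Ω] z) atTop)
    (hsub : ∀ x ∈ Ω, 0 < u x → u x ^ p ≤ Δ u x + V x * u x)
    (hsup : ∀ x ∈ Ω, Δ w x + V x * w x ≤ w x ^ p) :
    ∀ x ∈ Ω, u x ≤ w x := by
  intro x hx
  rcases le_or_gt (u x) 0 with hux | hux
  · exact hux.trans (hw_pos x hx).le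
  obtain ⟨y, hy, huy, hmax⟩ := exists_isMaxOn_div_of_tendsto_atTop hΩ hbdd.isCompact_closure huc
    hw.continuousOn hw_pos hw_top hx hux
  have hΩy := hΩ.mem_nhds hy
  have hle : u y ≤ w y := le_of_isLocalMax_div hp (hu.contDiffAt hΩy) (hw.contDiffAt hΩy) huy
    (hw_pos y hy) (hsub y hy huy) (hsup y hy) (hmax.isLocalMax hΩy)
  exact (div_le_one (hw_pos x hx)).1 ((hmax hx).trans ((div_le_one (hw_pos y hy)).2 hle))

end Comparison

section Barrier

section NormedAddCommGroup

variable {E : Type*} [NormedAddCommGroup E]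

/-- The radial barrier `(r² - |x - x₀|²) ^ (-α)`, which for `α > 0` blows up at the boundary of
`ball x₀ r`; a multiple of it is the large supersolution with which solutions are compared. -/
noncomputable def ballBarrier (x₀ : E) (r α : ℝ) (x : E) : ℝ := (r ^ 2 - ‖x - x₀‖ ^ 2) ^ (-α)

variable {x₀ x : E} {r α : ℝ}

theorem sq_sub_norm_sub_sq_pos (hx : x ∈ ball x₀ r) : 0 < r ^ 2 - ‖x - x₀‖ ^ 2 := by
  rw [mem_ball_iff_norm] at hx
  exact sub_pos.2 (pow_lt_pow_left₀ hx (norm_nonneg _) two_ne_zero)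

theorem ballBarrier_pos (hx : x ∈ ball x₀ r) : 0 < ballBarrier x₀ r α x :=
  rpow_pos_of_pos (sq_sub_norm_sub_sq_pos hx) _

theorem ballBarrier_center (hr : 0 ≤ r) : ballBarrier x₀ r α x₀ = r ^ (-(2 * α)) := by
  rw [ballBarrier, sub_self, norm_zero, zero_pow two_ne_zero, sub_zero, ← rpow_natCast_mul hr]
  norm_num

theorem tendsto_ballBarrier_atTop (hα : 0 < α) (hx : x ∈ sphere x₀ r) :
    Tendsto (ballBarrier x₀ r α) (𝓝[ball x₀ r] x) atTop := by
  refine (tendsto_rpow_neg_nhdsGT_zero (neg_neg_of_pos hα)).comp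
    (tendsto_nhdsWithin_iff.2 ⟨?_, ?_⟩)
  · refine (Continuous.tendsto' (by fun_prop) _ _ ?_).mono_left nhdsWithin_le_nhds
    rw [mem_sphere_iff_norm.1 hx, sub_self]
  · exact eventually_mem_nhdsWithin.mono fun _ => sq_sub_norm_sub_sq_pos

end NormedAddCommGroup

variable {E : Type*} [NormedAddCommGroup E] [InnerProductSpace ℝ E] {x₀ x : E} {r α : ℝ}

theorem contDiffOn_ballBarrier : ContDiffOn ℝ 2 (ballBarrier x₀ r α) (ball x₀ r) := fun _ hx =>
  ((contDiffAt_const.sub ((contDiffAt_id.sub contDiffAt_const).norm_sq ℝ)).rpow_const_of_ne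
    (sq_sub_norm_sub_sq_pos hx).ne').contDiffWithinAt

variable [FiniteDimensional ℝ E]

theorem laplacian_ballBarrier (hx : x ∈ ball x₀ r) :
    Δ (ballBarrier x₀ r α) x =
      4 * α * (α + 1) * ‖x - x₀‖ ^ 2 * (r ^ 2 - ‖x - x₀‖ ^ 2) ^ (-α - 2) +
        2 * finrank ℝ E * α * (r ^ 2 - ‖x - x₀‖ ^ 2) ^ (-α - 1) := by
  have hg : ContDiffAt ℝ 2 (fun s : ℝ => (r ^ 2 - s) ^ (-α)) (‖x - x₀‖ ^ 2) :=
    (contDiffAt_const.sub contDiffAt_id).rpow_const_of_ne (sq_sub_norm_sub_sq_pos hx).ne'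
  have hΔ := laplacian_comp_norm_sub_sq x₀ x hg
  rw [iteratedDeriv_two_const_sub_rpow, deriv_const_sub_rpow] at hΔ
  refine hΔ.trans ?_
  ring

theorem laplacian_ballBarrier_le (hα : 0 ≤ α) (hx : x ∈ ball x₀ r) :
    Δ (ballBarrier x₀ r α) x ≤
      (4 * α * (α + 1) + 2 * finrank ℝ E * α) * r ^ 2 *
        (r ^ 2 - ‖x - x₀‖ ^ 2) ^ (-α - 2) := by
  have hφ := sq_sub_norm_sub_sq_pos hx
  rw [laplacian_ballBarrier hx]
  set φ := r ^ 2 - ‖x - x₀‖ ^ 2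
  have hφ_le : φ ≤ r ^ 2 := sub_le_self _ (sq_nonneg _)
  have hx_le : ‖x - x₀‖ ^ 2 ≤ r ^ 2 := by linarith
  have hφ_pow : φ ^ (-α - 1) = φ * φ ^ (-α - 2) := by
    rw [← rpow_one_add' hφ.le (by linarith)]
    ring_nf
  calc 4 * α * (α + 1) * ‖x - x₀‖ ^ 2 * φ ^ (-α - 2) + 2 * finrank ℝ E * α * φ ^ (-α - 1)
      = (4 * α * (α + 1) * ‖x - x₀‖ ^ 2 + 2 * finrank ℝ E * α * φ) * φ ^ (-α - 2) := by
        rw [hφ_pow]; ring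
    _ ≤ (4 * α * (α + 1) * r ^ 2 + 2 * finrank ℝ E * α * r ^ 2) * φ ^ (-α - 2) := by gcongr
    _ = _ := by ring

theorem laplacian_smul_ballBarrier_add_le_rpow {A p B V : ℝ} (hp : 1 < p) (hA : 0 < A) (hB : 0 ≤ B)
    (hV : V ≤ B / r ^ 2) (hα : α = 2 / (p - 1))
    (hA_pow : (4 * α * (α + 1) + 2 * finrank ℝ E * α + B) * r ^ 2 ≤ A ^ (p - 1))
    (hx : x ∈ ball x₀ r) :
    Δ (A • ballBarrier x₀ r α) x + V * (A • ballBarrier x₀ r α) x ≤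
      (A • ballBarrier x₀ r α) x ^ p := by
  have hr : 0 < r := pos_of_mem_ball hx
  have hp' : 0 < p - 1 := sub_pos.2 hp
  have hαp : -α * p = -α - 2 := by rw [hα]; field_simp; ring
  have hα_pos : 0 < α := hα ▸ div_pos two_pos hp'
  have hφ := sq_sub_norm_sub_sq_pos hx
  have hΔ := laplacian_ballBarrier_le hα_pos.le hx
  have hΔw : Δ (A • ballBarrier x₀ r α) x = A * Δ (ballBarrier x₀ r α) x :=
    laplacian_smul A (contDiffOn_ballBarrier.contDiffAt (isOpen_ball.mem_nhds hx))
  have hwx : (A • ballBarrier x₀ r α) x = A * (r ^ 2 - ‖x - x₀‖ ^ 2) ^ (-α) := rfl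
  rw [hΔw, hwx]
  set φ := r ^ 2 - ‖x - x₀‖ ^ 2
  have hφ_le : φ ≤ r ^ 2 := sub_le_self _ (sq_nonneg _)
  have hφ_pow : φ ^ (-α) = φ ^ 2 * φ ^ (-α - 2) := by
    rw [← rpow_two, ← rpow_add hφ]
    ring_nf
  have hVw : V * (A * φ ^ (-α)) ≤ A * (B * r ^ 2 * φ ^ (-α - 2)) :=
    calc V * (A * φ ^ (-α)) ≤ B / r ^ 2 * (A * (φ ^ 2 * φ ^ (-α - 2))) := by
          rw [hφ_pow]; gcongr
      _ ≤ B / r ^ 2 * (A * ((r ^ 2) ^ 2 * φ ^ (-α - 2))) := by gcongr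
      _ = A * (B * r ^ 2 * φ ^ (-α - 2)) := by field_simp
  calc A * Δ (ballBarrier x₀ r α) x + V * (A * φ ^ (-α))
      ≤ A * ((4 * α * (α + 1) + 2 * finrank ℝ E * α) * r ^ 2 * φ ^ (-α - 2)) +
          A * (B * r ^ 2 * φ ^ (-α - 2)) := by gcongr
    _ = (4 * α * (α + 1) + 2 * finrank ℝ E * α + B) * r ^ 2 * A * φ ^ (-α - 2) := by ring
    _ ≤ A ^ (p - 1) * A * φ ^ (-α - 2) := by gcongr
    _ = (A * φ ^ (-α)) ^ p := by
      rw [mul_rpow hA.le (by positivity), ← rpow_mul hφ.le, hαp, ← rpow_add_one hA.ne',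
        sub_add_cancel]

/-- The constant of the Keller–Osserman bound in dimension `d` for the exponent `p` and a potential
bounded by `B / r ^ 2` on a ball of radius `r`. -/
noncomputable def kellerOssermanConst (d : ℕ) (p B : ℝ) : ℝ :=
  (4 * (2 / (p - 1)) * (2 / (p - 1) + 1) + 2 * d * (2 / (p - 1)) + B) ^ (1 / (p - 1))

theorem kellerOssermanConst_pos {d : ℕ} {p B : ℝ} (hp : 1 < p) (hB : 0 ≤ B) :
    0 < kellerOssermanConst d p B := by
  have : 0 < p - 1 := sub_pos.2 hp
  unfold kellerOssermanConst
  positivity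

theorem kellerOssermanConst_mul_rpow_rpow {d : ℕ} {p B : ℝ} (hp : 1 < p) (hB : 0 ≤ B)
    (hr : 0 ≤ r) :
    (kellerOssermanConst d p B * r ^ (2 / (p - 1))) ^ (p - 1) =
      (4 * (2 / (p - 1)) * (2 / (p - 1) + 1) + 2 * d * (2 / (p - 1)) + B) * r ^ 2 := by
  have hp' : 0 < p - 1 := sub_pos.2 hp
  rw [mul_rpow (kellerOssermanConst_pos hp hB).le (by positivity), ← rpow_mul hr,
    div_mul_cancel₀ _ hp'.ne', rpow_two, kellerOssermanConst, ← rpow_mul (by positivity),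
    one_div_mul_cancel hp'.ne', rpow_one]

theorem le_kellerOssermanConst_mul_rpow {u V : E → ℝ} {p B : ℝ} (hp : 1 < p) (hr : 0 < r)
    (hB : 0 ≤ B) (huc : ContinuousOn u (closedBall x₀ r)) (hu : ContDiffOn ℝ 2 u (ball x₀ r))
    (hV : ∀ x ∈ ball x₀ r, V x ≤ B / r ^ 2)
    (hsub : ∀ x ∈ ball x₀ r, 0 < u x → u x ^ p ≤ Δ u x + V x * u x) :
    u x₀ ≤ kellerOssermanConst (finrank ℝ E) p B * r ^ (-(2 / (p - 1))) := by
  have hα : 0 < 2 / (p - 1) := div_pos two_pos (sub_pos.2 hp)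
  set A := kellerOssermanConst (finrank ℝ E) p B * r ^ (2 / (p - 1)) with hA_def
  have hA : 0 < A := mul_pos (kellerOssermanConst_pos hp hB) (rpow_pos_of_pos hr _)
  calc u x₀ ≤ (A • ballBarrier x₀ r (2 / (p - 1))) x₀ :=
        le_of_tendsto_atTop_frontier hp isOpen_ball isBounded_ball
          (by rwa [closure_ball x₀ hr.ne']) hu (contDiffOn_ballBarrier.const_smul A)
          (fun x hx => mul_pos hA (ballBarrier_pos hx))
          (fun z hz => (tendsto_ballBarrier_atTop hα
            (frontier_ball_subset_sphere hz)).const_mul_atTop hA)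
          hsub (fun x hx => laplacian_smul_ballBarrier_add_le_rpow hp hA hB (hV x hx) rfl
            (kellerOssermanConst_mul_rpow_rpow hp hB hr.le).ge hx)
          x₀ (mem_ball_self hr)
    _ = kellerOssermanConst (finrank ℝ E) p B * r ^ (-(2 / (p - 1))) := by
      rw [Pi.smul_apply, smul_eq_mul, ballBarrier_center hr.le, hA_def, mul_assoc, ← rpow_add hr]
      ring_nf

end Barrier

section HalfSpace

variable {n : ℕ}

theorem lap_eq_laplacian (u : EuclideanSpace ℝ (Fin n) → ℝ) : lap u = Δ u := by
  ext x
  simp [laplacian_eq_iteratedFDeriv_orthonormalBasis u (EuclideanSpace.basisFun (Fin n) ℝ), lap]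

variable [NeZero n] {x z : EuclideanSpace ℝ (Fin n)}

theorem x1_apply (x : EuclideanSpace ℝ (Fin n)) : x1 x = x 0 :=
  dif_pos (NeZero.pos n)

theorem abs_x1_sub_le_dist (x z : EuclideanSpace ℝ (Fin n)) : |x1 x - x1 z| ≤ dist x z := by
  simpa [x1_apply, dist_eq_norm] using PiLp.norm_apply_le (x - z) 0

theorem half_x1_le_of_mem_closedBall (hz : z ∈ closedBall x (x1 x / 2)) : x1 x / 2 ≤ x1 z := by
  have := (le_abs_self _).trans ((abs_x1_sub_le_dist x z).trans (mem_closedBall'.1 hz))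
  linarith

theorem closedBall_half_x1_subset {R : ℝ} (hx : x ∈ halfSpace n ∩ ball 0 (R / 2)) :
    closedBall x (x1 x / 2) ⊆ halfSpace n ∩ ball 0 R := by
  intro z hz
  have hx_pos : 0 < x1 x := hx.1
  have hx_ball : dist x 0 < R / 2 := hx.2
  have hx_le : x1 x ≤ dist x 0 := by
    simpa [x1_apply] using (le_abs_self _).trans (abs_x1_sub_le_dist x 0)
  refine ⟨(half_pos hx_pos).trans_le (half_x1_le_of_mem_closedBall hz), ?_⟩
  calc dist z 0 ≤ dist z x + dist x 0 := dist_triangle _ _ _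
    _ < R := by linarith [mem_closedBall.1 hz]

end HalfSpace

end KellerOsserman

theorem stmt14_general (n : ℕ) (hn : n ≠ 0) (μ p : ℝ) (hp1 : 1 < p) :
    ∃ C > (0 : ℝ), ∀ (R : ℝ) (u : EuclideanSpace ℝ (Fin n) → ℝ),
      ContDiffOn ℝ 2 u (halfSpace n ∩ Metric.ball 0 R) →
      (∀ x ∈ halfSpace n ∩ Metric.ball 0 R, 0 < u x →
        u x ^ p ≤ lap u x + (μ / (x1 x) ^ 2) * u x) →
      ∀ x ∈ halfSpace n ∩ Metric.ball 0 (R / 2), u x ≤ C * x1 x ^ (-(2 / (p - 1))) := by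
  have : NeZero n := ⟨hn⟩
  have hK := kellerOssermanConst_pos (d := n) hp1 (abs_nonneg μ)
  refine ⟨kellerOssermanConst n p |μ| * 2⁻¹ ^ (-(2 / (p - 1))), by positivity,
    fun R u hu hsub x hx => ?_⟩
  have hx_pos : 0 < x1 x := hx.1
  have hball := closedBall_half_x1_subset hx
  have hball' := Metric.ball_subset_closedBall.trans hball
  have hV : ∀ z ∈ Metric.ball x (x1 x / 2), μ / x1 z ^ 2 ≤ |μ| / (x1 x / 2) ^ 2 := fun z hz => by
    have hz_le := half_x1_le_of_mem_closedBall (Metric.ball_subset_closedBall hz)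
    gcongr
    exact le_abs_self μ
  have hbound := le_kellerOssermanConst_mul_rpow hp1 (half_pos hx_pos) (abs_nonneg μ)
    (hu.continuousOn.mono hball) (hu.mono hball') hV
    fun z hz => by simpa only [lap_eq_laplacian] using hsub z (hball' hz)
  rwa [finrank_euclideanSpace_fin, div_eq_inv_mul (x1 x), mul_rpow (by positivity) hx_pos.le,
    ← mul_assoc] at hbound

/-- Keller–Osserman type bound: every positive classical solution
of `Δu + (μ/x₁²)u = u^p` on `ℝⁿ₊ ∩ B_R(0)` satisfies `u ≤ C x₁^{−2/(p−1)}` on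
`ℝⁿ₊ ∩ B_{R/2}(0)`, with `C` independent of the solution. -/
theorem stmt14 (n : ℕ) (hn : 2 ≤ n) (μ p R : ℝ) (hμ : μ < 1 / 4) (hp1 : 1 < p)
    (hR : 0 < R) :
    ∃ C > (0 : ℝ), ∀ u : EuclideanSpace ℝ (Fin n) → ℝ,
      ContDiffOn ℝ 2 u (halfSpace n ∩ Metric.ball 0 R) →
      (∀ x ∈ halfSpace n ∩ Metric.ball 0 R, 0 < u x) →
      (∀ x ∈ halfSpace n ∩ Metric.ball 0 R,
        lap u x + (μ / (x1 x) ^ 2) * u x = u x ^ p) →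
      ∀ x ∈ halfSpace n ∩ Metric.ball 0 (R / 2), u x ≤ C * x1 x ^ (-(2 / (p - 1))) := by
  obtain ⟨C, hC, hbound⟩ := stmt14_general n (by lia) μ p hp1
  exact ⟨C, hC, fun u hu _ heq => hbound R u hu fun x hx _ => (heq x hx).ge⟩
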